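/- For every n ≥ 5 there exists a fully resolvable strict MMDRR(2n); moreover the resolution consists of 2n full rounds. -/

import Mathlib

open scoped Classical

/-- A mixed doubles game: an unordered pair of teams, each team being a
(man, woman) pair, for `n` men and `n` women indexed by `Fin n`. -/
abbrev Game (n : ℕ) := Sym2 (Fin n × Fin n)

/-- A game is valid if its two teams have distinct men and distinct women. -/
def Game.valid {n : ℕ} (g : Game n) : Prop :=
  ∃ a b : Fin n × Fin n, g = s(a, b) ∧ a.1 ≠ b.1 ∧ a.2 ≠ b.2

/-- Man `m` plays in game `g`. -/
def Game.manIn {n : ℕ} (m : Fin n) (g : Game n) : Prop :=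
  ∃ a b : Fin n × Fin n, g = s(a, b) ∧ a.1 = m

/-- Woman `w` plays in game `g`. -/
def Game.womanIn {n : ℕ} (w : Fin n) (g : Game n) : Prop :=
  ∃ a b : Fin n × Fin n, g = s(a, b) ∧ a.2 = w

/-- Man `m` and woman `w` are partners (teammates) in game `g`. -/
def Game.partners {n : ℕ} (m w : Fin n) (g : Game n) : Prop :=
  (m, w) ∈ g

/-- Man `m` and woman `w` are opponents in game `g` (on different teams). -/
def Game.opposesMW {n : ℕ} (m w : Fin n) (g : Game n) : Prop :=
  ∃ a b : Fin n × Fin n, g = s(a, b) ∧ a.1 = m ∧ b.2 = w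

/-- Men `m` and `m'` are opponents in game `g`. -/
def Game.opposesMM {n : ℕ} (m m' : Fin n) (g : Game n) : Prop :=
  ∃ a b : Fin n × Fin n, g = s(a, b) ∧ a.1 = m ∧ b.1 = m'

/-- Women `w` and `w'` are opponents in game `g`. -/
def Game.opposesWW {n : ℕ} (w w' : Fin n) (g : Game n) : Prop :=
  ∃ a b : Fin n × Fin n, g = s(a, b) ∧ a.2 = w ∧ b.2 = w'

/-- A complete mixed doubles round robin tournament CMDRR(n,k). -/
structure CMDRR (n k : ℕ) where
  /-- The spouse pairs (man, woman). -/
  spouses : Finset (Fin n × Fin n)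
  spouses_card : spouses.card = k
  spouses_inj1 : ∀ p ∈ spouses, ∀ q ∈ spouses, p.1 = q.1 → p = q
  spouses_inj2 : ∀ p ∈ spouses, ∀ q ∈ spouses, p.2 = q.2 → p = q
  /-- The multiset of games. -/
  games : Multiset (Game n)
  valid : ∀ g ∈ games, g.valid
  /-- (i) no game contains both members of a spouse pair. -/
  no_spouse_game : ∀ g ∈ games, ∀ p ∈ spouses, ¬ (Game.manIn p.1 g ∧ Game.womanIn p.2 g)
  /-- (ii) every non-spouse man-woman pair partners exactly once ... -/
  partners_once : ∀ m w : Fin n, (m, w) ∉ spouses →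
    games.countP (Game.partners m w) = 1
  /-- ... and opposes exactly once. -/
  opposesMW_once : ∀ m w : Fin n, (m, w) ∉ spouses →
    games.countP (Game.opposesMW m w) = 1
  /-- (iii) a spoused man opposes every other man exactly once. -/
  spousedM_opposes : ∀ m ∈ spouses.image Prod.fst, ∀ m' : Fin n, m' ≠ m →
    games.countP (Game.opposesMM m m') = 1
  /-- (iii) a spoused woman opposes every other woman exactly once. -/
  spousedW_opposes : ∀ w ∈ spouses.image Prod.snd, ∀ w' : Fin n, w' ≠ w →
    games.countP (Game.opposesWW w w') = 1
  /-- (iv) an unspoused man opposes exactly one other unspoused man exactly twice,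
  and all other men exactly once. -/
  unspousedM_opposes : ∀ m : Fin n, m ∉ spouses.image Prod.fst →
    ∃ m' : Fin n, m' ≠ m ∧ m' ∉ spouses.image Prod.fst ∧
      games.countP (Game.opposesMM m m') = 2 ∧
      ∀ m'' : Fin n, m'' ≠ m → m'' ≠ m' → games.countP (Game.opposesMM m m'') = 1
  /-- (iv) likewise for unspoused women. -/
  unspousedW_opposes : ∀ w : Fin n, w ∉ spouses.image Prod.snd →
    ∃ w' : Fin n, w' ≠ w ∧ w' ∉ spouses.image Prod.snd ∧
      games.countP (Game.opposesWW w w') = 2 ∧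
      ∀ w'' : Fin n, w'' ≠ w → w'' ≠ w' → games.countP (Game.opposesWW w w'') = 1

/-- A round: a multiset of games in which each player appears at most once. -/
def IsRound {n : ℕ} (r : Multiset (Game n)) : Prop :=
  (∀ m : Fin n, r.countP (Game.manIn m) ≤ 1) ∧
  (∀ w : Fin n, r.countP (Game.womanIn w) ≤ 1)

/-- A full round: all players play if `n` is even; all but exactly one man and
one woman play if `n` is odd. -/
def FullRound {n : ℕ} (r : Multiset (Game n)) : Prop :=
  IsRound r ∧
  ((Even n ∧ (∀ m : Fin n, r.countP (Game.manIn m) = 1) ∧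
      (∀ w : Fin n, r.countP (Game.womanIn w) = 1)) ∨
   (¬ Even n ∧ (∃! m : Fin n, r.countP (Game.manIn m) = 0) ∧
      (∃! w : Fin n, r.countP (Game.womanIn w) = 0)))

/-
Label the `2n` men, the `2n` women and the `2n` rounds by the pairs `(v, i)` of a hole `v`, one of
`n`, and a bit `i`. A tournament is a collection of games in which each man-woman pair partners once
and opposes once, each player plays once in each round, and same-sex players from distinct holes
oppose once, from a common hole twice. A frame leaves out the games and the rounds within a hole:
there every relation holds once between distinct holes, and never within a hole. Wilson's
fundamental construction glues frames on the blocks of a group divisible design and tournaments on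
its groups.

Linear forms on `(ZMod m)²` with pairwise invertible determinants give transversal designs, and
their truncations give a tournament with `5 * m + s` holes from tournaments with `m` and with at
most `m` holes, if frames with `5`, ..., `8` holes exist. As all remainders `s` can be covered, the
theorem follows by induction from its cases `n < 35` and `n = 39`, `59`. A finite commutative ring
in which `2`, `u`, `u - 1` and `u + 1` are units for some `u` yields a frame with the ring as set of
holes; the other cases come from base games developed over a cyclic group, with some holes being
fixed.
-/

namespace MixedDoubles

/-- The players of one sex, and also the rounds: a set `V` of holes with two elements each. -/
abbrev Player (V : Type*) := V × Bool

/-- A game of the team `man₁`, `woman₁` against the team `man₂`, `woman₂`, played in a given round.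
Men, women and rounds are labelled by the same type `X`. -/
structure ScheduledGame (X : Type*) where
  round : X
  man₁ : X
  woman₁ : X
  man₂ : X
  woman₂ : X

/-- Relabelling of the men, the women and the rounds of a game. -/
def ScheduledGame.map {X Y : Type*} (f : X → Y) (t : ScheduledGame X) : ScheduledGame Y :=
  ⟨f t.round, f t.man₁, f t.woman₁, f t.man₂, f t.woman₂⟩

/-- The binary relations between men, women and rounds which a tournament has to balance. -/
inductive Incidence
  | partner
  | opponent
  | manRound
  | womanRound
  | menOpponent
  | womenOpponent
  deriving DecidableEq

instance : Fintype Incidence where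
  elems := {.partner, .opponent, .manRound, .womanRound, .menOpponent, .womenOpponent}
  complete k := by cases k <;> decide

/-- The two pairs which a game contributes to a relation. -/
def incidences {X : Type*} : Incidence → ScheduledGame X → Multiset (X × X)
  | .partner, t => {(t.man₁, t.woman₁), (t.man₂, t.woman₂)}
  | .opponent, t => {(t.man₁, t.woman₂), (t.man₂, t.woman₁)}
  | .manRound, t => {(t.round, t.man₁), (t.round, t.man₂)}
  | .womanRound, t => {(t.round, t.woman₁), (t.round, t.woman₂)}
  | .menOpponent, t => {(t.man₁, t.man₂), (t.man₂, t.man₁)}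
  | .womenOpponent, t => {(t.woman₁, t.woman₂), (t.woman₂, t.woman₁)}

lemma incidences_map {X Y : Type*} (f : X → Y) (k : Incidence) (t : ScheduledGame X) :
    incidences k (t.map f) = (incidences k t).map (Prod.map f f) := by
  cases k <;> rfl

lemma card_incidences {X : Type*} (k : Incidence) (t : ScheduledGame X) :
    Multiset.card (incidences k t) = 2 := by
  cases k <;> rfl

/-- The number of times that a pair is related by `k` in a collection of games. -/
noncomputable def incidenceCount {X : Type*} (k : Incidence) (M : Multiset (ScheduledGame X))
    (p : X × X) : ℕ :=
  (M.bind (incidences k)).count p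

lemma finsetSum_bind {ι α β : Type*} (s : Finset ι) (M : ι → Multiset α) (f : α → Multiset β) :
    (∑ i ∈ s, M i).bind f = ∑ i ∈ s, (M i).bind f :=
  map_sum (⟨⟨(Multiset.bind · f), Multiset.zero_bind f⟩, fun M N => Multiset.add_bind M N f⟩ :
    Multiset α →+ Multiset β) M s

section IncidenceCount

variable {X Y : Type*} (k : Incidence)

@[simp]
lemma incidenceCount_zero (p : X × X) : incidenceCount k 0 p = 0 := by
  simp [incidenceCount]

lemma incidenceCount_ne_zero {k : Incidence} {M : Multiset (ScheduledGame X)}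
    {t : ScheduledGame X} (ht : t ∈ M) {p : X × X} (hp : p ∈ incidences k t) :
    incidenceCount k M p ≠ 0 :=
  Multiset.count_ne_zero.2 (Multiset.mem_bind.2 ⟨t, ht, hp⟩)

lemma incidenceCount_add (M N : Multiset (ScheduledGame X)) (p : X × X) :
    incidenceCount k (M + N) p = incidenceCount k M p + incidenceCount k N p := by
  simp [incidenceCount, Multiset.add_bind]

lemma incidenceCount_sum {ι : Type*} (s : Finset ι) (M : ι → Multiset (ScheduledGame X))
    (p : X × X) : incidenceCount k (∑ i ∈ s, M i) p = ∑ i ∈ s, incidenceCount k (M i) p := by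
  simp only [incidenceCount, finsetSum_bind, Multiset.count_sum']

lemma incidenceCount_map (f : X → Y) (M : Multiset (ScheduledGame X)) (p : Y × Y) :
    incidenceCount k (M.map (.map f)) p =
      ((M.bind (incidences k)).map (Prod.map f f)).count p := by
  simp only [incidenceCount, Multiset.bind_map, incidences_map, Multiset.map_bind]

lemma incidenceCount_map_of_injective {f : X → Y} (hf : f.Injective)
    (M : Multiset (ScheduledGame X)) (x y : X) :
    incidenceCount k (M.map (.map f)) (f x, f y) = incidenceCount k M (x, y) := by
  rw [incidenceCount_map]
  exact Multiset.count_map_eq_count' _ _ (hf.prodMap hf) (x, y)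

lemma incidenceCount_map_of_notMem_range {f : X → Y} (M : Multiset (ScheduledGame X)) {a b : Y}
    (h : ¬(a ∈ Set.range f ∧ b ∈ Set.range f)) :
    incidenceCount k (M.map (.map f)) (a, b) = 0 := by
  rw [incidenceCount_map, Multiset.count_eq_zero, Multiset.mem_map]
  rintro ⟨⟨x, y⟩, -, hxy⟩
  obtain ⟨rfl, rfl⟩ := Prod.mk.inj hxy
  exact h ⟨⟨x, rfl⟩, ⟨y, rfl⟩⟩

end IncidenceCount

/-- The games can be scheduled such that every pair of players (or of a round and a player) from
distinct holes is related exactly once by each relation, and every pair from a common hole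
as often as prescribed by `w`. -/
def HasSchedule (w : Incidence → Bool → Bool → ℕ) (V : Type*) : Prop :=
  ∃ M : Multiset (ScheduledGame (Player V)), ∀ k x y,
    incidenceCount k M (x, y) = if x.1 = y.1 then w k x.2 y.2 else 1

/-- A resolvable strict tournament prescribes that players in a common hole be partners
and be opponents exactly once, but that same-sex opponents in a common hole meet twice. -/
def tournamentWeight : Incidence → Bool → Bool → ℕ
  | .menOpponent, i, j | .womenOpponent, i, j => if i = j then 0 else 2
  | _, _, _ => 1

/-- A frame: the two men, the two women and the two rounds of a hole never meet. -/
abbrev Frame (V : Type*) : Prop := HasSchedule 0 V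

/-- A resolvable strict mixed doubles round robin tournament, in which each player
shares a hole with the same-sex player that it opposes twice. -/
abbrev Tournament (V : Type*) : Prop := HasSchedule tournamentWeight V

section HasSchedule

variable {w : Incidence → Bool → Bool → ℕ} {U V : Type*}

lemma HasSchedule.exists_of_injective (hU : HasSchedule w U) {f : U → V} (hf : f.Injective) :
    ∃ M : Multiset (ScheduledGame (Player V)), ∀ k x y, incidenceCount k M (x, y) =
      if x.1 ∈ Set.range f ∧ y.1 ∈ Set.range f then
        if x.1 = y.1 then w k x.2 y.2 else 1
      else 0 := by
  obtain ⟨M, hM⟩ := hU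
  refine ⟨M.map (.map (Prod.map f id)), ?_⟩
  rintro k ⟨a, i⟩ ⟨b, j⟩
  have hcount (x y : U) := incidenceCount_map_of_injective k
    (hf.prodMap Function.injective_id) M (x, i) (y, j)
  split_ifs with hab h
  · obtain ⟨⟨x, rfl⟩, ⟨y, rfl⟩⟩ := hab
    exact (hcount x y).trans ((hM k _ _).trans (if_pos (hf h)))
  · obtain ⟨⟨x, rfl⟩, ⟨y, rfl⟩⟩ := hab
    exact (hcount x y).trans ((hM k _ _).trans (if_neg fun hxy => h (congrArg f hxy)))
  · refine incidenceCount_map_of_notMem_range k M fun ⟨⟨x, hx⟩, ⟨y, hy⟩⟩ => hab ?_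
    exact ⟨⟨x.1, congrArg Prod.fst hx⟩, ⟨y.1, congrArg Prod.fst hy⟩⟩

lemma HasSchedule.of_equiv (hU : HasSchedule w U) (e : U ≃ V) : HasSchedule w V := by
  obtain ⟨M, hM⟩ := hU.exists_of_injective e.injective
  exact ⟨M, fun k x y => (hM k x y).trans (if_pos ⟨e.surjective _, e.surjective _⟩)⟩

lemma HasSchedule.of_card_eq [Fintype U] [Fintype V] (hU : HasSchedule w U)
    (h : Fintype.card U = Fintype.card V) : HasSchedule w V :=
  hU.of_equiv (Fintype.equivOfCardEq h)

lemma hasSchedule_of_isEmpty [IsEmpty V] : HasSchedule w V :=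
  ⟨0, fun _ x => isEmptyElim x.1⟩

lemma frame_of_subsingleton [Subsingleton V] : Frame V :=
  ⟨0, fun _ x y => by simp [Subsingleton.elim x.1 y.1]⟩

lemma tournament_of_unique [Unique V] : Tournament V := by
  refine ⟨{⟨(default, false), (default, false), (default, false), (default, true), (default, true)⟩,
    ⟨(default, true), (default, false), (default, true), (default, true), (default, false)⟩}, ?_⟩
  rintro k ⟨a, i⟩ ⟨b, j⟩
  obtain rfl := Unique.eq_default a
  obtain rfl := Unique.eq_default b
  cases k <;> cases i <;> cases j <;>
    simp [incidenceCount, incidences, tournamentWeight]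

end HasSchedule

section GroupDivisible

variable {w : Incidence → Bool → Bool → ℕ} {V γ β : Type*} [Finite γ] [Finite β]

/-- A group divisible design with the fibres of `p` as groups and the sets `B b` as blocks: distinct
points lie in a common block, which is then unique, exactly if they lie in distinct groups. -/
def IsGroupDivisible (p : V → γ) (B : β → Set V) : Prop :=
  ∀ x y, x ≠ y → if p x = p y then ∀ b, ¬(x ∈ B b ∧ y ∈ B b) else ∃! b, x ∈ B b ∧ y ∈ B b

/-- Wilson's fundamental construction. -/
theorem IsGroupDivisible.hasSchedule {p : V → γ} {B : β → Set V} (hpB : IsGroupDivisible p B)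
    (hB : ∀ b, Frame (B b)) (hp : ∀ c, HasSchedule w {x // p x = c}) : HasSchedule w V := by
  cases nonempty_fintype γ
  cases nonempty_fintype β
  choose MB hMB using fun b => (hB b).exists_of_injective Subtype.val_injective
  choose Mp hMp using fun c => (hp c).exists_of_injective Subtype.val_injective
  refine ⟨∑ b, MB b + ∑ c, Mp c, fun k x y => ?_⟩
  rw [incidenceCount_add, incidenceCount_sum, incidenceCount_sum]
  simp only [hMB, hMp, Subtype.range_coe_subtype, Set.mem_ofPred_eq, Pi.zero_apply]
  by_cases hxy : x.1 = y.1
  · simp [hxy]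
  have hgroup : ∀ c, (p x.1 = c ∧ p y.1 = c) ↔ (p x.1 = c ∧ p x.1 = p y.1) := by grind
  have hblock := hpB _ _ hxy
  simp only [if_neg hxy, hgroup]
  split_ifs at hblock with hgroups
  · simp [hgroups, hblock]
  · obtain ⟨b, hb, hb'⟩ := hblock
    have huniq : ∀ b', (x.1 ∈ B b' ∧ y.1 ∈ B b') ↔ b' = b := fun b' => ⟨hb' b', fun h => h ▸ hb⟩
    simp [hgroups, huniq]

theorem Frame.tournament {V : Type*} [Finite V] (hV : Frame V) : Tournament V := by
  have hdesign : IsGroupDivisible (id : V → V) fun _ : Unit => Set.univ := fun x y hxy => by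
    simp [hxy]
  refine hdesign.hasSchedule (fun _ => hV.of_equiv (Equiv.Set.univ V).symm) fun c => ?_
  have : Unique {x // id x = c} := Unique.subtypeEq c
  exact tournament_of_unique

end GroupDivisible

section Transversal

variable {w : Incidence → Bool → Bool → ℕ} {R I : Type*} [CommRing R] [Finite I]

/-- The linear form on `R²` with coefficients `e`, evaluated at `b`. -/
def linearForm (e b : R × R) : R := e.1 * b.1 + e.2 * b.2

lemma existsUnique_linearForm_eq {e e' : R × R} (h : IsUnit (e.1 * e'.2 - e.2 * e'.1)) (a a' : R) :
    ∃! b : R × R, linearForm e b = a ∧ linearForm e' b = a' := by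
  obtain ⟨d, hd⟩ := h.exists_right_inv
  refine ⟨((e'.2 * a - e.2 * a') * d, (e.1 * a' - e'.1 * a) * d), ⟨?_, ?_⟩, ?_⟩
  · simp only [linearForm]
    linear_combination a * hd
  · simp only [linearForm]
    linear_combination a' * hd
  · rintro ⟨b, c⟩ ⟨rfl, rfl⟩
    ext <;> simp only [linearForm]
    · linear_combination -b * hd
    · linear_combination -c * hd

/-- Each `b : R × R` gives the block of all points `(i, linearForm (e i) b)`, so that the groups
`C i` are those of a transversal design, truncated. -/
theorem hasSchedule_of_transversal [Finite R] {e : I → R × R}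
    (he : Pairwise fun i j => IsUnit ((e i).1 * (e j).2 - (e i).2 * (e j).1)) {C : I → Set R}
    (hblock : ∀ b, Frame {i // linearForm (e i) b ∈ C i}) (hgroup : ∀ i, HasSchedule w (C i)) :
    HasSchedule w (Σ i, C i) := by
  have hdesign : IsGroupDivisible (Sigma.fst : (Σ i, C i) → I)
      fun b : R × R => {x | linearForm (e x.1) b = x.2} := by
    rintro ⟨i, a⟩ ⟨j, a'⟩ hne
    dsimp only
    split_ifs with hij
    · obtain rfl : i = j := hij
      rintro b ⟨hb, hb'⟩
      exact hne (congrArg _ (Subtype.ext (hb.symm.trans hb')))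
    · exact existsUnique_linearForm_eq (he hij) a a'
  refine hdesign.hasSchedule (fun b => (hblock b).of_equiv ?_) fun i =>
    (hgroup i).of_equiv ((Equiv.sigmaSubtype (β := fun i => C i) i).symm)
  exact
    { toFun := fun i => ⟨⟨i, _, i.2⟩, rfl⟩
      invFun := fun x => ⟨x.1.1, x.2 ▸ x.1.2.2⟩
      left_inv := fun _ => rfl
      right_inv := fun ⟨⟨i, a, ha⟩, hx⟩ => by obtain rfl : linearForm (e i) b = a := hx; rfl }

lemma isUnit_intCast_zmod {m k : ℕ} (hm : ∀ d, 0 < d → d < k → d.Coprime m) {d : ℤ} (h0 : d ≠ 0)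
    (hd : d.natAbs < k) : IsUnit (d : ZMod m) := by
  rw [ZMod.coe_int_isUnit_iff_isCoprime, Int.isCoprime_iff_gcd_eq_one]
  exact (hm _ (Int.natAbs_pos.2 h0) hd).symm

/-- Directions: the point at infinity `(0, 1)` and the slopes `(1, i)` for `i < k`. -/
def direction (m : ℕ) {k : ℕ} : Fin (k + 1) → ZMod m × ZMod m :=
  Fin.cons (0, 1) fun i => (1, (i : ℕ))

lemma isUnit_direction_det {m k : ℕ} (hm : ∀ d, 0 < d → d < k → d.Coprime m) :
    Pairwise fun i j : Fin (k + 1) => IsUnit ((direction m i).1 * (direction m j).2 -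
      (direction m i).2 * (direction m j).1) := by
  intro i j hij
  cases i using Fin.cases with
  | zero =>
    cases j using Fin.cases with
    | zero => exact absurd rfl hij
    | succ j => simp [direction]
  | succ i =>
    cases j using Fin.cases with
    | zero => simp [direction]
    | succ j =>
      have h : (i : ℕ) ≠ j := fun h => hij (congrArg Fin.succ (Fin.ext h))
      have hunit := isUnit_intCast_zmod hm (d := (j : ℤ) - i) (by omega) (by omega)
      simpa [direction] using hunit

theorem hasSchedule_sum_of_coprime {m k : ℕ} [NeZero m] (hm : ∀ d, 0 < d → d < k → d.Coprime m)
    {c : Fin (k + 1) → ℕ} (hc : ∀ i, c i ≤ m)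
    (hblock : ∀ l, Fintype.card {i // c i = m} ≤ l → l ≤ k + 1 → Frame (Fin l))
    (hgroup : ∀ i, HasSchedule w (Fin (c i))) : HasSchedule w (Fin (∑ i, c i)) := by
  have hcard : ∀ i, ∃ C : Finset (ZMod m), C.card = c i := fun i =>
    (Finset.exists_subset_card_eq (s := .univ) (by simpa [ZMod.card] using hc i)).imp fun _ h => h.2
  choose C hC using hcard
  have hfull : ∀ i, c i = m → C i = Finset.univ := fun i hi =>
    Finset.eq_univ_of_card _ (by rw [hC, hi, ZMod.card])
  have hsched := hasSchedule_of_transversal (w := w) (isUnit_direction_det hm)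
    (C := fun i => C i) (fun b => ?_) fun i => (hgroup i).of_card_eq (by simp [hC])
  · exact hsched.of_card_eq (by simp [hC])
  · refine (hblock (Fintype.card {i // linearForm (direction m i) b ∈ C i}) ?_ ?_).of_card_eq
      (by simp)
    · exact Fintype.card_subtype_mono _ _ fun i hi => by simp [hfull i hi]
    · exact (Fintype.card_subtype_le _).trans (by simp)

end Transversal

section Development

variable {w : Incidence → Bool → Bool → ℕ} {G κ : Type*} [AddGroup G]

/-- Translation by `s`. Besides the holes labelled by the group `G` there are the holes labelled
by `κ`, called infinite, which are fixed. -/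
def translate (s : G) : Player (G ⊕ κ) → Player (G ⊕ κ) :=
  Prod.map (Sum.map (s + ·) id) id

/-- A representative of the orbit of a pair under translations: the first of its two entries which
is not infinite is moved to `0`. -/
def orbitRep : Player (G ⊕ κ) × Player (G ⊕ κ) → Player (G ⊕ κ) × Player (G ⊕ κ)
  | ((.inl x, i), (.inl y, j)) => ((.inl 0, i), (.inl (-x + y), j))
  | ((.inl _, i), (.inr d, j)) => ((.inl 0, i), (.inr d, j))
  | ((.inr c, i), (.inl _, j)) => ((.inr c, i), (.inl 0, j))
  | ((.inr c, i), (.inr d, j)) => ((.inr c, i), (.inr d, j))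

/-- The number of times that the pairs related by `k` in a collection of base games
represent the orbit of a pair. -/
noncomputable def orbitCount (k : Incidence) (M : Multiset (ScheduledGame (Player (G ⊕ κ))))
    (p : Player (G ⊕ κ) × Player (G ⊕ κ)) : ℕ :=
  ((M.bind (incidences k)).map orbitRep).count p

lemma orbitCount_sum {ι : Type*} (k : Incidence) (s : Finset ι)
    (M : ι → Multiset (ScheduledGame (Player (G ⊕ κ)))) (p : Player (G ⊕ κ) × Player (G ⊕ κ)) :
    orbitCount k (∑ i ∈ s, M i) p = ∑ i ∈ s, orbitCount k (M i) p := by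
  simp only [orbitCount, finsetSum_bind, ← Multiset.coe_mapAddMonoidHom, map_sum,
    Multiset.count_sum']

lemma card_translate_eq [Fintype G] (p q : Player (G ⊕ κ) × Player (G ⊕ κ)) :
    (Finset.univ.filter fun s => p = q.map (translate s) (translate s)).card =
      (if p.1.1.isRight ∧ p.2.1.isRight then Fintype.card G else 1) *
        if orbitRep p = orbitRep q then 1 else 0 := by
  have hsolve : ∀ (a x : G) (P : Prop) [Decidable P] (Q : G → Prop) [DecidablePred Q],
      (∀ s, Q s ↔ a = s + x ∧ P) → (Finset.univ.filter Q).card = if P then 1 else 0 := by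
    intro a x P _ Q _ hQ
    simp only [hQ, Finset.card_filter, ← sub_eq_iff_eq_add, ite_and, Finset.sum_ite_eq,
      Finset.mem_univ, if_true]
  obtain ⟨⟨a | a, i⟩, ⟨b | b, j⟩⟩ := p <;> obtain ⟨⟨x | x, i'⟩, ⟨y | y, j'⟩⟩ := q <;>
    simp only [translate, orbitRep, Prod.map_apply, Sum.map_inl, Sum.map_inr, id_eq, Prod.mk.injEq,
      Sum.inl.injEq, Sum.inr.injEq, Sum.isRight_inl, Sum.isRight_inr, Bool.false_eq_true,
      reduceCtorEq, true_and, false_and, and_true, and_false, and_self, ↓reduceIte, mul_ite,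
      mul_one, mul_zero, Finset.filter_const, Finset.card_empty]
  · refine hsolve a x _ _ fun s => ⟨?_, ?_⟩
    · rintro ⟨⟨rfl, hi⟩, rfl, hj⟩
      exact ⟨rfl, hi, by simp [add_assoc], hj⟩
    · rintro ⟨rfl, hi, hb, hj⟩
      rw [neg_add_eq_iff_eq_add, add_assoc, add_neg_cancel_left] at hb
      exact ⟨⟨rfl, hi⟩, hb, hj⟩
  · exact hsolve a x _ _ fun s => and_assoc
  · exact hsolve b y _ _ fun s => by tauto
  · split_ifs <;> simp

lemma incidenceCount_sum_translate [Fintype G] (k : Incidence)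
    (M : Multiset (ScheduledGame (Player (G ⊕ κ)))) (p : Player (G ⊕ κ) × Player (G ⊕ κ)) :
    incidenceCount k (∑ s : G, M.map (.map (translate s))) p =
      (if p.1.1.isRight ∧ p.2.1.isRight then Fintype.card G else 1) *
        orbitCount k M (orbitRep p) := by
  rw [incidenceCount_sum, orbitCount]
  simp only [incidenceCount_map]
  induction M.bind (incidences k) using Multiset.induction_on with
  | empty => simp
  | cons q N ih =>
    simp only [Multiset.map_cons, Multiset.count_cons, Finset.sum_add_distrib, mul_add, ih,
      ← card_translate_eq, Finset.card_filter]
    congr!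

/-- The orbit counts of base games whose translates relate each pair of players (or a round and
a player) as often as `w` prescribes, except for pairs from infinite holes, which are not
related. -/
structure IsBalanced (w : Incidence → Bool → Bool → ℕ)
    (N : Incidence → Player (G ⊕ κ) × Player (G ⊕ κ) → ℕ) : Prop where
  same_hole : ∀ k i j, N k ((.inl 0, i), (.inl 0, j)) = w k i j
  of_ne_zero : ∀ k i j x, x ≠ 0 → N k ((.inl 0, i), (.inl x, j)) = 1
  inl_inr : ∀ k i j d, N k ((.inl 0, i), (.inr d, j)) = 1
  inr_inl : ∀ k i j c, N k ((.inr c, i), (.inl 0, j)) = 1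
  inr_inr : ∀ k i j c d, N k ((.inr c, i), (.inr d, j)) = 0

theorem IsBalanced.hasSchedule [Finite G] {M : Multiset (ScheduledGame (Player (G ⊕ κ)))}
    (hM : IsBalanced w (orbitCount · M)) (hκ : HasSchedule w κ) : HasSchedule w (G ⊕ κ) := by
  cases nonempty_fintype G
  obtain ⟨N, hN⟩ := hκ.exists_of_injective (Sum.inr_injective (α := G))
  refine ⟨∑ s : G, M.map (.map (translate s)) + N, fun k x y => ?_⟩
  rw [incidenceCount_add, incidenceCount_sum_translate, hN]
  obtain ⟨a | c, i⟩ := x <;> obtain ⟨b | d, j⟩ := y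
  · by_cases hab : a = b
    · simp [orbitRep, hab, hM.same_hole]
    · have hba : -a + b ≠ 0 := fun h => hab (neg_add_eq_zero.1 h)
      simp [orbitRep, hab, hM.of_ne_zero k i j _ hba]
  · simp [orbitRep, hM.inl_inr]
  · simp [orbitRep, hM.inr_inl]
  · simp [orbitRep, hM.inr_inr]

end Development

section AlgebraicFrame

variable {R : Type*} [CommRing R]

lemma exists_half_system [Finite R] (h2 : IsUnit (2 : R)) :
    ∃ S : Finset R, 0 ∉ S ∧ ∀ x, x ≠ 0 → (x ∈ S ↔ -x ∉ S) := by
  cases nonempty_fintype R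
  refine ⟨Finset.univ.filter fun x => WellOrderingRel x (-x), by simp [irrefl], fun x hx => ?_⟩
  have hne : x ≠ -x := fun h => hx ((h2.mul_right_eq_zero).1 (by linear_combination h))
  simp only [Finset.mem_filter, Finset.mem_univ, true_and, neg_neg]
  exact ⟨asymm, (trichotomous_of WellOrderingRel x (-x)).resolve_right ∘ fun h => by
    simpa [hne] using h⟩

/-- Four base games, which develop into a frame when `x` runs through half of `R`. -/
def frameBase (u x : R) : Multiset (ScheduledGame (Player (R ⊕ Empty))) :=
  {⟨(.inl 0, false), (.inl x, false), (.inl (u * x), false), (.inl (-x), false),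
      (.inl (-(u * x)), true)⟩,
    ⟨(.inl 0, false), (.inl x, true), (.inl (u * x), true), (.inl (-x), true),
      (.inl (-(u * x)), false)⟩,
    ⟨(.inl 0, true), (.inl (u * x), false), (.inl x, false), (.inl (-(u * x)), true),
      (.inl (-x), false)⟩,
    ⟨(.inl 0, true), (.inl (-(u * x)), false), (.inl (-x), true), (.inl (u * x), true),
      (.inl x, true)⟩}

/-- The differences in `frameBase u x` are `± frameMultiplier u k i j * x`. -/
def frameMultiplier (u : R) : Incidence → Bool → Bool → R
  | .partner, _, _ => u - 1
  | .opponent, _, _ => u + 1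
  | .manRound, i, _ => if i then u else 1
  | .womanRound, i, _ => if i then 1 else u
  | .menOpponent, i, j | .womenOpponent, i, j => if i = j then 2 else 2 * u

lemma orbitCount_frameBase (u x d : R) (k : Incidence) (i j : Bool) :
    orbitCount k (frameBase u x) ((.inl 0, i), (.inl d, j)) =
      (if d = frameMultiplier u k i j * x then 1 else 0) +
        if d = -(frameMultiplier u k i j * x) then 1 else 0 := by
  cases k <;> cases i <;> cases j <;>
    simp only [orbitCount, frameBase, frameMultiplier, incidences, Multiset.insert_eq_cons,
      Multiset.cons_bind, Multiset.singleton_bind, Multiset.map_add, Multiset.map_cons,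
      Multiset.map_singleton, orbitRep, Multiset.count_add, Multiset.count_cons,
      Multiset.count_singleton, Prod.mk.injEq, Sum.inl.injEq, Bool.false_eq_true,
      reduceCtorEq, true_and, false_and, and_true, and_false, and_self, ↓reduceIte, add_zero,
      zero_add] <;>
    ring_nf

lemma sum_half_system {S : Finset R} (h0 : 0 ∉ S) (hS : ∀ x, x ≠ 0 → (x ∈ S ↔ -x ∉ S)) {a : R}
    (ha : IsUnit a) (d : R) :
    ∑ x ∈ S, ((if d = a * x then 1 else 0) + if d = -(a * x) then 1 else 0) =
      if d = 0 then 0 else 1 := by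
  obtain ⟨a, rfl⟩ := ha
  obtain ⟨e, rfl⟩ : ∃ e, d = a * e := ⟨↑a⁻¹ * d, by simp⟩
  have hneg : ∀ x, a * e = -(a * x) ↔ -e = x := fun x => by
    rw [← mul_neg, a.mul_right_inj, neg_eq_iff_eq_neg]
  simp only [a.mul_right_inj, hneg, Finset.sum_add_distrib, Finset.sum_ite_eq,
    Units.mul_right_eq_zero]
  by_cases he : e = 0
  · simp [he, h0]
  · by_cases hmem : e ∈ S
    · simp [he, hmem, (hS e he).1 hmem]
    · simp [he, hmem, not_not.1 (mt (hS e he).2 hmem)]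

theorem frame_of_isUnit [Finite R] {u : R} (h2 : IsUnit (2 : R)) (hu : IsUnit u)
    (hsub : IsUnit (u - 1)) (hadd : IsUnit (u + 1)) : Frame R := by
  obtain ⟨S, h0, hS⟩ := exists_half_system h2
  have hmul : ∀ k i j, IsUnit (frameMultiplier u k i j) := by
    intro k i j
    cases k <;> cases i <;> cases j <;> simp [frameMultiplier, h2, hu, hsub, hadd]
  have hcount : ∀ k i j d, orbitCount k (∑ x ∈ S, frameBase u x) ((.inl 0, i), (.inl d, j)) =
      if d = 0 then 0 else 1 := fun k i j d => by
    simp only [orbitCount_sum, orbitCount_frameBase, sum_half_system h0 hS (hmul k i j)]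
  have hbalanced : IsBalanced 0 (orbitCount · (∑ x ∈ S, frameBase u x)) :=
    { same_hole := fun k i j => by simp [hcount]
      of_ne_zero := fun k i j x hx => by simp [hcount, hx]
      inl_inr := fun _ _ _ d => d.elim
      inr_inl := fun _ _ _ c => c.elim
      inr_inr := fun _ _ _ c => c.elim }
  exact (hbalanced.hasSchedule hasSchedule_of_isEmpty).of_equiv (Equiv.sumEmpty R Empty)

theorem frame_of_coprime_six {n : ℕ} (hn : n.Coprime 6) : Frame (Fin n) := by
  have : NeZero n := ⟨by rintro rfl; norm_num at hn⟩
  have hunit : ∀ d : ℕ, d ∣ 6 → IsUnit (d : ZMod n) := fun d hd =>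
    (ZMod.isUnit_iff_coprime d n).2 (hn.coprime_dvd_right hd).symm
  have h2 : IsUnit (2 : ZMod n) := mod_cast hunit 2 (by norm_num)
  have h3 : IsUnit (2 + 1 : ZMod n) := by convert hunit 3 (by norm_num); norm_num
  have h1 : IsUnit (2 - 1 : ZMod n) := by norm_num
  exact (frame_of_isUnit h2 h2 h1 h3).of_card_eq (by simp)

theorem frame_of_field {F : Type*} [Field F] [Fintype F] (h2 : (2 : F) ≠ 0)
    (hF : 3 < Fintype.card F) : Frame F := by
  obtain ⟨u, -, hu⟩ := Finset.exists_mem_notMem_of_card_lt_card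
    (s := ({0, 1, -1} : Finset F)) (t := Finset.univ) (Finset.card_le_three.trans_lt hF)
  simp only [Finset.mem_insert, Finset.mem_singleton, not_or] at hu
  exact frame_of_isUnit h2.isUnit (IsUnit.mk0 u hu.1) (sub_ne_zero.2 hu.2.1).isUnit
    (IsUnit.mk0 _ fun h => hu.2.2 (eq_neg_of_add_eq_zero_left h))

theorem frame_of_odd_prime_pow {p k : ℕ} [Fact p.Prime] (hp : p ≠ 2) (hk : 3 < p ^ k) :
    Frame (Fin (p ^ k)) := by
  have hk0 : k ≠ 0 := by rintro rfl; norm_num at hk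
  have := Fintype.ofFinite (GaloisField p k)
  have hcard : Fintype.card (GaloisField p k) = p ^ k := by
    rw [← Nat.card_eq_fintype_card, GaloisField.card p k hk0]
  exact (frame_of_field (Ring.two_ne_zero (by rwa [ringChar.eq (GaloisField p k) p]))
    (hcard ▸ hk)).of_card_eq (by simp [hcard])

end AlgebraicFrame

section Packing

lemma exists_sum_pow_eq {B : ℕ} (hB : 0 < B) (a : ℕ) (N : Multiset ℕ) :
    ∃ q r, (N.map (B ^ ·)).sum = r + B ^ a * (N.count a + B * q) ∧
      r * B ≤ Multiset.card N * B ^ a := by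
  induction N using Multiset.induction_on with
  | empty => exact ⟨0, 0, by simp⟩
  | cons b N ih =>
    obtain ⟨q, r, hsum, hr⟩ := ih
    rw [Multiset.map_cons, Multiset.sum_cons, hsum, Multiset.card_cons, add_one_mul]
    rcases lt_trichotomy a b with hab | rfl | hab
    · refine ⟨q + B ^ (b - (a + 1)), r, ?_, by omega⟩
      have hpow : B ^ b = B ^ a * B * B ^ (b - (a + 1)) := by
        rw [← pow_succ, ← pow_add, Nat.add_sub_cancel' hab]
      rw [Multiset.count_cons_of_ne hab.ne, hpow]
      ring
    · refine ⟨q, r, ?_, by omega⟩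
      rw [Multiset.count_cons_self]
      ring
    · refine ⟨q, r + B ^ b, ?_, ?_⟩
      · rw [Multiset.count_cons_of_ne hab.ne']
        ring
      · have hpow : B ^ b * B ≤ B ^ a := by
          rw [← pow_succ]
          exact Nat.pow_le_pow_right hB hab
        rw [add_mul]
        omega

lemma sum_pow_div_mod {B : ℕ} {N : Multiset ℕ} (hN : Multiset.card N < B) (a : ℕ) :
    (N.map (B ^ ·)).sum / B ^ a % B = N.count a := by
  have hB : 0 < B := Nat.zero_lt_of_lt hN
  obtain ⟨q, r, hsum, hr⟩ := exists_sum_pow_eq hB a N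
  have hlt : r < B ^ a := by
    refine lt_of_mul_lt_mul_right (hr.trans_lt ?_) hB.le
    rw [mul_comm (B ^ a)]
    exact Nat.mul_lt_mul_of_pos_right hN (by positivity)
  rw [hsum, Nat.add_mul_div_left _ _ (by positivity), Nat.div_eq_of_lt hlt, zero_add,
    Nat.add_mul_mod_self_left, Nat.mod_eq_of_lt ((Multiset.count_le_card a N).trans_lt hN)]

variable {w : Incidence → Bool → Bool → ℕ} {g k : ℕ}

/-- Players are numbered such that those of a hole have consecutive numbers, the group `Fin g`
comes first, and the infinite holes `Fin k` follow. -/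
def playerEquiv (g k : ℕ) : Player (Fin g ⊕ Fin k) ≃ Fin ((g + k) * 2) :=
  (finSumFinEquiv.prodCongr finTwoEquiv.symm).trans finProdFinEquiv

/-- Numbering of the pairs of players. -/
def pairCode (p : Player (Fin g ⊕ Fin k) × Player (Fin g ⊕ Fin k)) : ℕ :=
  finProdFinEquiv (p.map (playerEquiv g k) (playerEquiv g k))

lemma pairCode_injective : (pairCode (g := g) (k := k)).Injective :=
  Fin.val_injective.comp <| finProdFinEquiv.injective.comp <|
    (playerEquiv g k).injective.prodMap (playerEquiv g k).injective

variable [NeZero g]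

/-- All orbit counts of a collection of base games, as the digits of one number in base `512`:
kernel arithmetic evaluates it quickly, as opposed to `orbitCount`. -/
def packedOrbitCounts (c : Incidence) (M : Multiset (ScheduledGame (Player (Fin g ⊕ Fin k)))) : ℕ :=
  ((M.bind (incidences c)).map fun p => 512 ^ pairCode (orbitRep p)).sum

/-- The digit of `packedOrbitCounts` which is the orbit count of a pair. -/
def packedOrbitCount (M : Multiset (ScheduledGame (Player (Fin g ⊕ Fin k)))) (c : Incidence)
    (p : Player (Fin g ⊕ Fin k) × Player (Fin g ⊕ Fin k)) : ℕ :=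
  packedOrbitCounts c M / 512 ^ pairCode p % 512

lemma packedOrbitCount_eq {M : Multiset (ScheduledGame (Player (Fin g ⊕ Fin k)))}
    (hM : Multiset.card M < 256) : packedOrbitCount M = (orbitCount · M) := by
  ext c p
  have hcard : Multiset.card (((M.bind (incidences c)).map orbitRep).map pairCode) < 512 := by
    simp only [Multiset.card_map, Multiset.card_bind, Function.comp_def, card_incidences,
      Multiset.map_const', Multiset.sum_replicate, smul_eq_mul]
    omega
  have hdigit := sum_pow_div_mod hcard (pairCode p)
  rw [Multiset.count_map_eq_count' _ _ pairCode_injective] at hdigit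
  simp only [Multiset.map_map, Function.comp_def] at hdigit
  simp only [packedOrbitCount, packedOrbitCounts, orbitCount]
  convert hdigit

/-- The player with a given number, numbers `≥ 2 * (g + k)` being junk. -/
def playerOfCode (g k : ℕ) [NeZero g] (a : ℕ) : Player (Fin g ⊕ Fin k) :=
  have : NeZero ((g + k) * 2) := ⟨mul_ne_zero (by simp [NeZero.ne g]) two_ne_zero⟩
  (playerEquiv g k).symm (Fin.ofNat _ a)

/-- The base games of a list in which the players are given by their numbers. -/
def baseGames (g k : ℕ) [NeZero g] (L : List (ScheduledGame ℕ)) :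
    Multiset (ScheduledGame (Player (Fin g ⊕ Fin k))) :=
  (L : Multiset (ScheduledGame ℕ)).map (.map (playerOfCode g k))

instance (N : Incidence → Player (Fin g ⊕ Fin k) × Player (Fin g ⊕ Fin k) → ℕ) :
    Decidable (IsBalanced w N) :=
  decidable_of_iff (∀ c i j, N c ((.inl 0, i), (.inl 0, j)) = w c i j ∧
      (∀ x, x ≠ 0 → N c ((.inl 0, i), (.inl x, j)) = 1) ∧
      (∀ d, N c ((.inl 0, i), (.inr d, j)) = 1) ∧ (∀ d, N c ((.inr d, i), (.inl 0, j)) = 1) ∧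
      ∀ d d', N c ((.inr d, i), (.inr d', j)) = 0)
    ⟨fun h => ⟨fun c i j => (h c i j).1, fun c i j => (h c i j).2.1, fun c i j => (h c i j).2.2.1,
      fun c i j => (h c i j).2.2.2.1, fun c i j => (h c i j).2.2.2.2⟩,
    fun h c i j => ⟨h.1 c i j, h.2 c i j, h.3 c i j, h.4 c i j, h.5 c i j⟩⟩

theorem hasSchedule_of_baseGames {L : List (ScheduledGame ℕ)} (hk : HasSchedule w (Fin k))
    (hL : L.length < 256) (hbalanced : IsBalanced w (packedOrbitCount (baseGames g k L))) :
    HasSchedule w (Fin (g + k)) := by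
  rw [packedOrbitCount_eq (by simpa [baseGames] using hL)] at hbalanced
  exact (hbalanced.hasSchedule hk).of_equiv finSumFinEquiv

/-- A base game with its images under a Klein four-group: one generator exchanges the two elements
of each hole, the other one exchanges men with women, and in the infinite holes also
the two elements. On the rounds the generators act as additions of `e` and of `f`. -/
def symmetricGames (g e f : ℕ) (t : ScheduledGame ℕ) : List (ScheduledGame ℕ) :=
  let flip := fun a => a ^^^ 1
  let mirror := fun a => if a < 2 * g then a else flip a
  [t, ⟨t.round + e, flip t.man₁, flip t.woman₁, flip t.man₂, flip t.woman₂⟩,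
    ⟨t.round + f, mirror t.woman₁, mirror t.man₁, mirror t.woman₂, mirror t.man₂⟩,
    ⟨t.round + e + f, flip (mirror t.woman₁), flip (mirror t.man₁), flip (mirror t.woman₂),
      flip (mirror t.man₂)⟩]

/-- Base games which are invariant under the symmetries above. The games in `H` are played in the
two rounds of the hole `0` of the group, and each game in `T` uses up the rounds of two infinite
holes, starting from its own one. -/
def symmetricBase (g : ℕ) (H T : List (ScheduledGame ℕ)) : List (ScheduledGame ℕ) :=
  H.flatMap (symmetricGames g 0 1) ++ T.flatMap (symmetricGames g 1 2)

/-- Both games among the players of the first hole of the group, in the two rounds of the first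
infinite hole. -/
def holeGames (g : ℕ) : List (ScheduledGame ℕ) :=
  [⟨2 * g, 0, 0, 1, 1⟩, ⟨2 * g + 1, 0, 1, 1, 0⟩]

end Packing

section SmallCases

/- The base games were found by computer search. By `playerEquiv` the number `2 * a + i` stands for
the player, or the round, `(a, i)`. -/

theorem tournament_five : Tournament (Fin 5) :=
  (frame_of_coprime_six (by norm_num)).tournament

theorem frame_six : Frame (Fin 6) :=
  hasSchedule_of_baseGames (g := 5) (k := 1) frame_of_subsingleton
    (L := [
      ⟨0, 11, 6, 2, 5⟩, ⟨0, 10, 7, 9, 3⟩, ⟨0, 4, 10, 3, 9⟩, ⟨0, 6, 11, 8, 4⟩, ⟨0, 7, 8, 5, 2⟩,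
      ⟨1, 10, 6, 4, 8⟩, ⟨1, 11, 9, 7, 2⟩, ⟨1, 3, 10, 6, 4⟩, ⟨1, 9, 11, 5, 3⟩, ⟨1, 8, 5, 2, 7⟩,
      ⟨10, 0, 9, 3, 6⟩, ⟨11, 0, 2, 5, 7⟩])
    (by decide +kernel) (by decide +kernel)

theorem frame_eight : Frame (Fin 8) :=
  hasSchedule_of_baseGames (g := 7) (k := 1) frame_of_subsingleton
    (L := [
      ⟨0, 2, 9, 10, 13⟩, ⟨1, 9, 2, 13, 10⟩, ⟨0, 3, 5, 12, 11⟩, ⟨1, 5, 3, 11, 12⟩, ⟨0, 4, 8, 15, 12⟩,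
      ⟨1, 8, 4, 12, 15⟩, ⟨0, 5, 10, 14, 7⟩, ⟨1, 7, 14, 10, 5⟩, ⟨0, 6, 4, 13, 2⟩, ⟨1, 2, 13, 4, 6⟩,
      ⟨0, 7, 15, 9, 3⟩, ⟨1, 3, 9, 15, 7⟩, ⟨0, 8, 14, 11, 6⟩, ⟨1, 6, 11, 14, 8⟩, ⟨14, 0, 8, 13, 3⟩,
      ⟨15, 0, 6, 9, 5⟩])
    (by decide +kernel) (by decide +kernel)

theorem tournament_ten : Tournament (Fin 10) :=
  hasSchedule_of_baseGames (g := 9) (k := 1) tournament_of_unique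
    (L := holeGames 9 ++ symmetricBase 9 [
      ⟨0, 0, 4, 2, 8⟩, ⟨0, 4, 15, 11, 16⟩, ⟨0, 8, 0, 13, 11⟩, ⟨0, 18, 6, 15, 12⟩,
      ⟨0, 16, 18, 6, 3⟩] [])
    (by decide +kernel) (by decide +kernel)

theorem tournament_twelve : Tournament (Fin 12) :=
  hasSchedule_of_baseGames (g := 11) (k := 1) tournament_of_unique
    (L := holeGames 11 ++ symmetricBase 11 [
      ⟨0, 8, 21, 16, 19⟩, ⟨0, 14, 2, 20, 6⟩, ⟨0, 12, 10, 19, 15⟩, ⟨0, 0, 5, 10, 16⟩,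
      ⟨0, 22, 8, 6, 1⟩, ⟨0, 2, 22, 5, 12⟩] [])
    (by decide +kernel) (by decide +kernel)

theorem tournament_fourteen : Tournament (Fin 14) :=
  hasSchedule_of_baseGames (g := 13) (k := 1) tournament_of_unique
    (L := holeGames 13 ++ symmetricBase 13 [
      ⟨0, 0, 6, 19, 11⟩, ⟨0, 6, 17, 8, 13⟩, ⟨0, 2, 9, 10, 22⟩, ⟨0, 4, 14, 16, 20⟩,
      ⟨0, 14, 3, 24, 0⟩, ⟨0, 26, 24, 20, 19⟩, ⟨0, 22, 26, 13, 4⟩] [])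
    (by decide +kernel) (by decide +kernel)

theorem frame_fifteen : Frame (Fin 15) :=
  hasSchedule_of_baseGames (g := 15) (k := 0) hasSchedule_of_isEmpty
    (L := symmetricBase 15 [
      ⟨0, 2, 13, 20, 6⟩, ⟨0, 16, 21, 24, 18⟩, ⟨0, 12, 2, 26, 4⟩, ⟨0, 8, 11, 28, 15⟩,
      ⟨0, 4, 16, 15, 22⟩, ⟨0, 6, 8, 23, 27⟩, ⟨0, 10, 29, 19, 24⟩] [])
    (by decide +kernel) (by decide +kernel)

theorem tournament_sixteen : Tournament (Fin 16) :=
  hasSchedule_of_baseGames (g := 15) (k := 1) tournament_of_unique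
    (L := holeGames 15 ++ symmetricBase 15 [
      ⟨0, 14, 26, 29, 20⟩, ⟨0, 12, 16, 24, 2⟩, ⟨0, 0, 15, 27, 7⟩, ⟨0, 18, 1, 22, 29⟩,
      ⟨0, 6, 5, 16, 10⟩, ⟨0, 8, 24, 21, 23⟩, ⟨0, 30, 18, 4, 9⟩, ⟨0, 10, 30, 3, 12⟩] [])
    (by decide +kernel) (by decide +kernel)

theorem tournament_eighteen : Tournament (Fin 18) :=
  hasSchedule_of_baseGames (g := 17) (k := 1) tournament_of_unique
    (L := holeGames 17 ++ symmetricBase 17 [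
      ⟨0, 2, 1, 26, 15⟩, ⟨0, 0, 18, 29, 3⟩, ⟨0, 24, 17, 33, 29⟩, ⟨0, 22, 24, 30, 8⟩,
      ⟨0, 12, 26, 14, 31⟩, ⟨0, 8, 32, 19, 4⟩, ⟨0, 16, 22, 20, 11⟩, ⟨0, 34, 20, 10, 7⟩,
      ⟨0, 4, 34, 7, 12⟩] [])
    (by decide +kernel) (by decide +kernel)

theorem tournament_twenty : Tournament (Fin 20) :=
  hasSchedule_of_baseGames (g := 19) (k := 1) tournament_of_unique
    (L := holeGames 19 ++ symmetricBase 19 [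
      ⟨0, 10, 4, 28, 35⟩, ⟨0, 16, 14, 22, 25⟩, ⟨0, 2, 19, 30, 22⟩, ⟨0, 14, 33, 27, 37⟩,
      ⟨0, 18, 6, 32, 9⟩, ⟨0, 34, 0, 36, 12⟩, ⟨0, 8, 21, 24, 29⟩, ⟨0, 4, 26, 21, 3⟩,
      ⟨0, 38, 10, 0, 31⟩, ⟨0, 12, 38, 7, 16⟩] [])
    (by decide +kernel) (by decide +kernel)

theorem frame_twentyOne : Frame (Fin 21) :=
  hasSchedule_of_baseGames (g := 21) (k := 0) hasSchedule_of_isEmpty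
    (L := symmetricBase 21 [
      ⟨0, 10, 26, 32, 17⟩, ⟨0, 6, 24, 36, 19⟩, ⟨0, 26, 22, 30, 28⟩, ⟨0, 24, 21, 38, 5⟩,
      ⟨0, 18, 31, 41, 38⟩, ⟨0, 2, 13, 29, 37⟩, ⟨0, 16, 2, 35, 15⟩, ⟨0, 8, 40, 13, 32⟩,
      ⟨0, 20, 7, 22, 34⟩, ⟨0, 4, 10, 14, 9⟩] [])
    (by decide +kernel) (by decide +kernel)

theorem tournament_twentyTwo : Tournament (Fin 22) :=
  hasSchedule_of_baseGames (g := 21) (k := 1) tournament_of_unique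
    (L := holeGames 21 ++ symmetricBase 21 [
      ⟨0, 8, 2, 34, 41⟩, ⟨0, 16, 4, 26, 39⟩, ⟨0, 6, 24, 23, 1⟩, ⟨0, 28, 21, 36, 34⟩,
      ⟨0, 2, 30, 14, 37⟩, ⟨0, 0, 26, 13, 8⟩, ⟨0, 10, 6, 31, 12⟩, ⟨0, 4, 15, 18, 17⟩,
      ⟨0, 20, 10, 24, 32⟩, ⟨0, 42, 28, 32, 19⟩, ⟨0, 40, 42, 39, 22⟩] [])
    (by decide +kernel) (by decide +kernel)

theorem tournament_twentyFour : Tournament (Fin 24) :=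
  hasSchedule_of_baseGames (g := 23) (k := 1) tournament_of_unique
    (L := holeGames 23 ++ symmetricBase 23 [
      ⟨0, 20, 24, 26, 23⟩, ⟨0, 8, 28, 38, 19⟩, ⟨0, 12, 42, 34, 5⟩, ⟨0, 18, 1, 32, 14⟩,
      ⟨0, 0, 6, 31, 41⟩, ⟨0, 4, 36, 25, 26⟩, ⟨0, 42, 30, 44, 13⟩, ⟨0, 2, 9, 28, 21⟩,
      ⟨0, 6, 44, 14, 3⟩, ⟨0, 36, 34, 40, 16⟩, ⟨0, 46, 10, 22, 33⟩, ⟨0, 10, 46, 17, 38⟩] [])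
    (by decide +kernel) (by decide +kernel)

theorem tournament_twentyEight : Tournament (Fin 28) :=
  hasSchedule_of_baseGames (g := 27) (k := 1) tournament_of_unique
    (L := holeGames 27 ++ symmetricBase 27 [
      ⟨0, 4, 34, 50, 21⟩, ⟨0, 8, 14, 46, 41⟩, ⟨0, 6, 24, 48, 31⟩, ⟨0, 2, 44, 52, 11⟩,
      ⟨0, 0, 52, 34, 43⟩, ⟨0, 24, 16, 26, 29⟩, ⟨0, 22, 19, 44, 5⟩, ⟨0, 14, 36, 31, 8⟩,
      ⟨0, 20, 47, 43, 23⟩, ⟨0, 28, 12, 38, 48⟩, ⟨0, 18, 39, 37, 33⟩, ⟨0, 10, 1, 13, 50⟩,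
      ⟨0, 54, 26, 17, 3⟩, ⟨0, 40, 54, 33, 7⟩] [])
    (by decide +kernel) (by decide +kernel)

theorem tournament_thirtyTwo : Tournament (Fin 32) :=
  hasSchedule_of_baseGames (g := 27) (k := 5) tournament_five
    (L := holeGames 27 ++ symmetricBase 27 [
      ⟨0, 14, 2, 40, 53⟩, ⟨0, 24, 18, 30, 37⟩, ⟨0, 22, 8, 32, 47⟩, ⟨0, 2, 24, 52, 31⟩,
      ⟨0, 16, 42, 38, 13⟩, ⟨0, 34, 10, 46, 28⟩, ⟨0, 54, 40, 48, 32⟩, ⟨0, 56, 0, 37, 38⟩,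
      ⟨0, 58, 34, 45, 14⟩, ⟨0, 60, 44, 0, 5⟩, ⟨0, 62, 50, 5, 7⟩, ⟨0, 42, 54, 28, 20⟩,
      ⟨0, 50, 56, 26, 17⟩, ⟨0, 8, 58, 10, 49⟩, ⟨0, 6, 60, 19, 26⟩, ⟨0, 20, 62, 13, 23⟩] [
      ⟨56, 0, 19, 33, 52⟩, ⟨60, 0, 34, 29, 33⟩])
    (by decide +kernel) (by decide +kernel)

theorem frame_thirtyThree : Frame (Fin 33) :=
  hasSchedule_of_baseGames (g := 27) (k := 6) frame_six
    (L := symmetricBase 27 [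
      ⟨0, 14, 2, 40, 53⟩, ⟨0, 24, 27, 19, 4⟩, ⟨0, 4, 42, 44, 18⟩, ⟨0, 34, 40, 37, 17⟩,
      ⟨0, 54, 32, 28, 24⟩, ⟨0, 56, 46, 22, 44⟩, ⟨0, 58, 8, 3, 20⟩, ⟨0, 60, 48, 51, 28⟩,
      ⟨0, 62, 30, 9, 14⟩, ⟨0, 64, 38, 27, 13⟩, ⟨0, 32, 54, 42, 6⟩, ⟨0, 12, 56, 30, 22⟩,
      ⟨0, 38, 58, 6, 11⟩, ⟨0, 20, 60, 16, 51⟩, ⟨0, 46, 62, 52, 37⟩, ⟨0, 48, 64, 11, 35⟩] [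
      ⟨54, 0, 47, 35, 6⟩, ⟨58, 0, 45, 13, 36⟩, ⟨62, 0, 10, 45, 47⟩])
    (by decide +kernel) (by decide +kernel)

theorem tournament_thirtyFour : Tournament (Fin 34) :=
  hasSchedule_of_baseGames (g := 29) (k := 5) tournament_five
    (L := holeGames 29 ++ symmetricBase 29 [
      ⟨0, 10, 54, 48, 5⟩, ⟨0, 6, 44, 52, 15⟩, ⟨0, 20, 8, 38, 51⟩, ⟨0, 16, 22, 42, 37⟩,
      ⟨0, 14, 48, 44, 11⟩, ⟨0, 22, 26, 36, 33⟩, ⟨0, 32, 42, 56, 0⟩, ⟨0, 58, 20, 2, 28⟩,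
      ⟨0, 60, 2, 5, 12⟩, ⟨0, 62, 40, 19, 34⟩, ⟨0, 64, 18, 34, 7⟩, ⟨0, 66, 16, 40, 39⟩,
      ⟨0, 0, 58, 54, 46⟩, ⟨0, 28, 60, 30, 53⟩, ⟨0, 24, 62, 46, 57⟩, ⟨0, 8, 64, 13, 30⟩,
      ⟨0, 26, 66, 51, 24⟩] [
      ⟨60, 0, 40, 27, 43⟩, ⟨64, 0, 30, 19, 41⟩])
    (by decide +kernel) (by decide +kernel)

theorem frame_thirtyNine : Frame (Fin 39) :=
  hasSchedule_of_baseGames (g := 33) (k := 6) frame_six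
    (L := symmetricBase 33 [
      ⟨0, 18, 30, 48, 37⟩, ⟨0, 10, 20, 56, 47⟩, ⟨0, 12, 8, 54, 59⟩, ⟨0, 26, 52, 40, 15⟩,
      ⟨0, 6, 64, 50, 56⟩, ⟨0, 38, 3, 61, 12⟩, ⟨0, 16, 33, 4, 51⟩, ⟨0, 66, 4, 46, 44⟩,
      ⟨0, 68, 60, 28, 62⟩, ⟨0, 70, 18, 63, 24⟩, ⟨0, 72, 48, 59, 16⟩, ⟨0, 74, 6, 44, 11⟩,
      ⟨0, 76, 40, 35, 55⟩, ⟨0, 32, 66, 42, 26⟩, ⟨0, 36, 68, 8, 38⟩, ⟨0, 2, 70, 64, 43⟩,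
      ⟨0, 30, 72, 14, 23⟩, ⟨0, 24, 74, 23, 28⟩, ⟨0, 20, 76, 53, 35⟩] [
      ⟨66, 0, 15, 59, 56⟩, ⟨70, 0, 52, 55, 17⟩, ⟨74, 0, 24, 21, 43⟩])
    (by decide +kernel) (by decide +kernel)

end SmallCases

section Existence

variable {w : Incidence → Bool → Bool → ℕ}

lemma frame_of_mem_Icc {l : ℕ} (h5 : 5 ≤ l) (h8 : l ≤ 8) : Frame (Fin l) := by
  interval_cases l
  · exact frame_of_coprime_six (by norm_num)
  · exact frame_six
  · exact frame_of_coprime_six (by norm_num)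
  · exact frame_eight

theorem hasSchedule_five_mul_add_sum {m j : ℕ} [NeZero m] (hj : j ≤ 2)
    (hm : ∀ d, 0 < d → d < 5 + j → d.Coprime m) {s : Fin (j + 1) → ℕ} (hs : ∀ i, s i ≤ m)
    (hm_sched : HasSchedule w (Fin m)) (hs_sched : ∀ i, HasSchedule w (Fin (s i))) :
    HasSchedule w (Fin (5 * m + ∑ i, s i)) := by
  let c : Fin (5 + (j + 1)) → ℕ := Fin.append (fun _ => m) s
  have hsum : ∑ i, c i = 5 * m + ∑ i, s i := by simp [c, Fin.sum_univ_add]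
  have hfull : 5 ≤ Fintype.card {i // c i = m} := by
    simpa using Fintype.card_le_of_injective (α := Fin 5)
      (fun i => (⟨Fin.castAdd (j + 1) i, Fin.append_left _ _ i⟩ : {i // c i = m}))
      fun i i' h => Fin.castAdd_injective 5 (j + 1) (congrArg Subtype.val h)
  rw [← hsum]
  refine hasSchedule_sum_of_coprime hm (c := c) (fun i => ?_)
    (fun l hl hl' => frame_of_mem_Icc (hfull.trans hl) (by omega)) fun i => ?_
  · induction i using Fin.addCases (m := 5) (n := j + 1) with
    | left i => exact (Fin.append_left _ _ i).le
    | right i => exact (Fin.append_right _ _ i).trans_le (hs i)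
  · induction i using Fin.addCases (m := 5) (n := j + 1) with
    | left i => simpa only [c, Fin.append_left] using hm_sched
    | right i => simpa only [c, Fin.append_right] using hs_sched i

lemma tournament_of_lt_thirtyFive {n : ℕ} (h5 : 5 ≤ n) (hn : n < 35) : Tournament (Fin n) := by
  by_cases h6 : n.Coprime 6
  · exact (frame_of_coprime_six h6).tournament
  have hcoprime : ∀ d, 0 < d → d < 5 → d.Coprime 5 := fun d h0 h5 => by
    interval_cases d <;> norm_num
  interval_cases n
  all_goals first | exact absurd (by decide) h6 | skip
  · exact frame_six.tournament
  · exact frame_eight.tournament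
  · exact (frame_of_odd_prime_pow (p := 3) (k := 2) (by norm_num) (by norm_num)).tournament
  · exact tournament_ten
  · exact tournament_twelve
  · exact tournament_fourteen
  · exact frame_fifteen.tournament
  · exact tournament_sixteen
  · exact tournament_eighteen
  · exact tournament_twenty
  · exact frame_twentyOne.tournament
  · exact tournament_twentyTwo
  · exact tournament_twentyFour
  · exact hasSchedule_five_mul_add_sum (m := 5) (j := 0) (s := ![1]) (by norm_num) hcoprime
      (by simp) tournament_five (by simpa using tournament_of_unique)
  · exact (frame_of_odd_prime_pow (p := 3) (k := 3) (by norm_num) (by norm_num)).tournament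
  · exact tournament_twentyEight
  · exact hasSchedule_five_mul_add_sum (m := 5) (j := 0) (s := ![5]) (by norm_num) hcoprime
      (by simp) tournament_five (by simpa using tournament_five)
  · exact tournament_thirtyTwo
  · exact frame_thirtyThree.tournament
  · exact tournament_thirtyFour

lemma exists_coprime_thirty {n : ℕ} (hn : 35 ≤ n) (h39 : n ≠ 39) (h59 : n ≠ 59) :
    ∃ m, m.Coprime 30 ∧ 7 ≤ m ∧ 5 * m ≤ n ∧ n ≤ 8 * m ∧ n ≠ 5 * m + 4 := by
  rcases le_or_gt n 56 with h | h
  · exact ⟨7, by norm_num, by omega⟩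
  rcases le_or_gt n 88 with h | h
  · exact ⟨11, by norm_num, by omega⟩
  rcases le_or_gt n 104 with h | h
  · exact ⟨13, by norm_num, by omega⟩
  rcases le_or_gt n 152 with h | h
  · exact ⟨19, by norm_num, by omega⟩
  rcases le_or_gt n 232 with h | h
  · exact ⟨29, by norm_num, by omega⟩
  rcases le_or_gt n 344 with h | h
  · exact ⟨43, by norm_num, by omega⟩
  · exact ⟨30 * ((n - 10) / 150) + 1, by simp, by omega⟩

/-- The sizes `2`, `3`, `4`, for which there is no tournament at hand, can be avoided. -/
lemma exists_add_add_eq {m r : ℕ} (hm : 7 ≤ m) (hr : r ≤ 3 * m) (h4 : r ≠ 4) :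
    ∃ s : Fin 3 → ℕ, ∑ i, s i = r ∧ ∀ i, s i ≤ m ∧ (s i ≤ 1 ∨ 5 ≤ s i) := by
  suffices h : ∃ a b c, a + b + c = r ∧ (a ≤ m ∧ (a ≤ 1 ∨ 5 ≤ a)) ∧ (b ≤ m ∧ (b ≤ 1 ∨ 5 ≤ b)) ∧
      (c ≤ m ∧ (c ≤ 1 ∨ 5 ≤ c)) by
    obtain ⟨a, b, c, hsum, ha, hb, hc⟩ := h
    exact ⟨![a, b, c], by simpa [Fin.sum_univ_three] using hsum, by simp [Fin.forall_fin_succ, *]⟩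
  rcases le_or_gt r 3 with h | h
  · exact ⟨min 1 r, min 1 (r - 1), r - 2, by omega⟩
  rcases le_or_gt r 7 with h | h
  · exact ⟨r, 0, 0, by omega⟩
  rcases le_or_gt r 9 with h | h
  · exact ⟨7, 1, r - 8, by omega⟩
  rcases le_or_gt r (2 * m) with h | h
  · exact ⟨r / 2, (r + 1) / 2, 0, by omega⟩
  · exact ⟨r / 3, (r + 1) / 3, (r + 2) / 3, by omega⟩

lemma coprime_of_coprime_thirty {m : ℕ} (hm : m.Coprime 30) {d : ℕ} (h0 : 0 < d) (h7 : d < 7) :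
    d.Coprime m := by
  have h2 : d ∣ 30 ^ 2 := by interval_cases d <;> norm_num
  exact ((hm.pow_right 2).coprime_dvd_right h2).symm

theorem tournament_of_five_le {n : ℕ} (hn : 5 ≤ n) : Tournament (Fin n) := by
  induction n using Nat.strong_induction_on with
  | _ n ih =>
    by_cases hlt : n < 35
    · exact tournament_of_lt_thirtyFive hn hlt
    by_cases h39 : n = 39
    · exact h39 ▸ frame_thirtyNine.tournament
    by_cases h59 : n = 59
    · exact h59 ▸ (frame_of_coprime_six (by norm_num)).tournament
    obtain ⟨m, hm, h7, hle, hge, hne⟩ := exists_coprime_thirty (not_lt.1 hlt) h39 h59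
    obtain ⟨s, hsum, hs⟩ := exists_add_add_eq (r := n - 5 * m) h7 (by omega) (by omega)
    have : NeZero m := ⟨by omega⟩
    rw [← Nat.add_sub_cancel' hle, ← hsum]
    refine hasSchedule_five_mul_add_sum le_rfl (fun d => coprime_of_coprime_thirty hm)
      (fun i => (hs i).1) (ih m (by omega) (by omega)) fun i => ?_
    have hlt : s i < n := by have := (hs i).1; omega
    rcases (hs i).2 with h | h
    · interval_cases s i
      · exact hasSchedule_of_isEmpty
      · exact tournament_of_unique
    · exact ih (s i) hlt h

end Existence

section IsTournament

/-- The games of a resolvable strict tournament in which `x` and `σ x` are the same-sex players that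
oppose each other twice. -/
structure IsTournament {X : Type*} [DecidableEq X] (σ : X → X)
    (M : Multiset (ScheduledGame X)) : Prop where
  pair_ne : ∀ x, σ x ≠ x
  mixed : ∀ k, k ≠ .menOpponent → k ≠ .womenOpponent → ∀ x y, incidenceCount k M (x, y) = 1
  men : ∀ x y,
    incidenceCount .menOpponent M (x, y) = if y = x then 0 else if y = σ x then 2 else 1
  women : ∀ x y,
    incidenceCount .womenOpponent M (x, y) = if y = x then 0 else if y = σ x then 2 else 1

lemma Tournament.exists_isTournament {V X : Type*} [DecidableEq X] (hV : Tournament V)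
    (e : Player V ≃ X) : ∃ (σ : X → X) (M : Multiset (ScheduledGame X)), IsTournament σ M := by
  obtain ⟨M, hM⟩ := hV
  have hcount (k : Incidence) (x y : X) : incidenceCount k (M.map (.map e)) (x, y) =
      if (e.symm x).1 = (e.symm y).1 then
        tournamentWeight k (e.symm x).2 (e.symm y).2 else 1 := by
    rw [← hM, ← incidenceCount_map_of_injective k e.injective, e.apply_symm_apply,
      e.apply_symm_apply]
  have hweight (x y : X) : (if (e.symm x).1 = (e.symm y).1 then
      if (e.symm x).2 = (e.symm y).2 then 0 else 2 else 1) =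
      if y = x then 0 else if y = e ((e.symm x).1, !(e.symm x).2) then 2 else 1 := by
    obtain ⟨⟨a, i⟩, rfl⟩ := e.surjective x
    obtain ⟨⟨b, j⟩, rfl⟩ := e.surjective y
    cases i <;> cases j <;> simp [eq_comm]
  refine ⟨fun x => e ((e.symm x).1, !(e.symm x).2), M.map (.map e), fun x hx => ?_,
    fun k hmen hwomen x y => ?_, fun x y => (hcount _ x y).trans (hweight x y),
    fun x y => (hcount _ x y).trans (hweight x y)⟩
  · simpa using congrArg Prod.snd (e.eq_symm_apply.2 hx)
  · rw [hcount]
    cases k <;> simp_all [tournamentWeight]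

/-- The four players of a game are distinct. -/
def ScheduledGame.IsProper {X : Type*} (t : ScheduledGame X) : Prop :=
  t.man₁ ≠ t.man₂ ∧ t.woman₁ ≠ t.woman₂

variable {X : Type*} {σ : X → X} {M : Multiset (ScheduledGame X)} {k : Incidence}

lemma IsTournament.isProper [DecidableEq X] (h : IsTournament σ M) : ∀ t ∈ M, t.IsProper := by
  intro t ht
  constructor <;> intro heq
  · exact incidenceCount_ne_zero (k := .menOpponent) ht (by simp [incidences, ← heq])
      ((h.men t.man₁ _).trans (if_pos rfl))
  · exact incidenceCount_ne_zero (k := .womenOpponent) ht (by simp [incidences, ← heq])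
      ((h.women t.woman₁ _).trans (if_pos rfl))

lemma nodup_incidences {t : ScheduledGame X} (ht : t.IsProper) : (incidences k t).Nodup := by
  obtain ⟨hmen, hwomen⟩ := ht
  cases k <;> simp [incidences, hmen, hwomen, hmen.symm]

lemma countP_eq_incidenceCount {P : ScheduledGame X → Prop} {p : X × X}
    (hM : ∀ t ∈ M, t.IsProper) (hP : ∀ t, P t ↔ p ∈ incidences k t) :
    M.countP P = incidenceCount k M p := by
  induction M using Multiset.induction_on with
  | empty => rw [Multiset.countP_zero, incidenceCount_zero]
  | cons t M ih =>
    rw [Multiset.forall_mem_cons] at hM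
    rw [Multiset.countP_cons, ih hM.2, ← Multiset.singleton_add, incidenceCount_add, add_comm]
    simp only [hP, incidenceCount, Multiset.singleton_bind,
      Multiset.count_eq_of_nodup (nodup_incidences hM.1)]

end IsTournament

section Games

lemma sum_filter_eq {ι α : Type*} [Fintype ι] [DecidableEq ι] (M : Multiset α) (f : α → ι) :
    ∑ i, M.filter (f · = i) = M := by
  ext a
  simp [Multiset.count_sum', Multiset.count_filter]

lemma exists_sym2_eq_iff {α : Type*} {Q : α → α → Prop} (A B : α) :
    (∃ a b, s(A, B) = s(a, b) ∧ Q a b) ↔ Q A B ∨ Q B A := by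
  constructor
  · rintro ⟨a, b, hab, hQ⟩
    obtain ⟨rfl, rfl⟩ | ⟨rfl, rfl⟩ := Sym2.eq_iff.1 hab
    exacts [.inl hQ, .inr hQ]
  · rintro (hQ | hQ)
    exacts [⟨A, B, rfl, hQ⟩, ⟨B, A, Sym2.eq_swap, hQ⟩]

variable {N : ℕ} {σ : Fin N → Fin N} {M : Multiset (ScheduledGame (Fin N))} {k : Incidence}

/-- Forgets the round and the order of the teams. -/
def ScheduledGame.toGame (t : ScheduledGame (Fin N)) : Game N :=
  s((t.man₁, t.woman₁), (t.man₂, t.woman₂))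

lemma partners_toGame (m w : Fin N) (t : ScheduledGame (Fin N)) :
    t.toGame.partners m w ↔ (m, w) ∈ incidences .partner t := by
  simp [Game.partners, ScheduledGame.toGame, incidences]

lemma opposesMW_toGame (m w : Fin N) (t : ScheduledGame (Fin N)) :
    t.toGame.opposesMW m w ↔ (m, w) ∈ incidences .opponent t := by
  rw [Game.opposesMW, ScheduledGame.toGame, exists_sym2_eq_iff]
  simp [incidences, eq_comm]

lemma opposesMM_toGame (m m' : Fin N) (t : ScheduledGame (Fin N)) :
    t.toGame.opposesMM m m' ↔ (m, m') ∈ incidences .menOpponent t := by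
  rw [Game.opposesMM, ScheduledGame.toGame, exists_sym2_eq_iff]
  simp [incidences, eq_comm]

lemma opposesWW_toGame (w w' : Fin N) (t : ScheduledGame (Fin N)) :
    t.toGame.opposesWW w w' ↔ (w, w') ∈ incidences .womenOpponent t := by
  rw [Game.opposesWW, ScheduledGame.toGame, exists_sym2_eq_iff]
  simp [incidences, eq_comm]

lemma manIn_toGame (r m : Fin N) (t : ScheduledGame (Fin N)) :
    t.toGame.manIn m ∧ t.round = r ↔ (r, m) ∈ incidences .manRound t := by
  rw [Game.manIn, ScheduledGame.toGame, exists_sym2_eq_iff]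
  simp only [incidences, Multiset.insert_eq_cons, Multiset.mem_cons, Multiset.mem_singleton,
    Prod.mk.injEq]
  grind

lemma womanIn_toGame (r w : Fin N) (t : ScheduledGame (Fin N)) :
    t.toGame.womanIn w ∧ t.round = r ↔ (r, w) ∈ incidences .womanRound t := by
  rw [Game.womanIn, ScheduledGame.toGame, exists_sym2_eq_iff]
  simp only [incidences, Multiset.insert_eq_cons, Multiset.mem_cons, Multiset.mem_singleton,
    Prod.mk.injEq]
  grind

lemma countP_map_toGame {P : Game N → Prop} {p : Fin N × Fin N} (hM : ∀ t ∈ M, t.IsProper)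
    (hP : ∀ t : ScheduledGame (Fin N), P t.toGame ↔ p ∈ incidences k t) :
    (M.map (·.toGame)).countP P = incidenceCount k M p := by
  rw [Multiset.countP_map, ← Multiset.countP_eq_card_filter, countP_eq_incidenceCount hM hP]

/-- The games of round `r`. -/
noncomputable def roundGames (M : Multiset (ScheduledGame (Fin N))) (r : Fin N) :
    Multiset (Game N) :=
  (M.filter (·.round = r)).map (·.toGame)

lemma sum_roundGames (M : Multiset (ScheduledGame (Fin N))) :
    ∑ r, roundGames M r = M.map (·.toGame) := by
  conv_rhs => rw [← sum_filter_eq M (·.round)]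
  exact (map_sum (Multiset.mapAddMonoidHom (·.toGame)) (fun r => M.filter (·.round = r)) _).symm

lemma countP_roundGames {P : Game N → Prop} {r m : Fin N} (hM : ∀ t ∈ M, t.IsProper)
    (hP : ∀ t : ScheduledGame (Fin N), P t.toGame ∧ t.round = r ↔ (r, m) ∈ incidences k t) :
    (roundGames M r).countP P = incidenceCount k M (r, m) := by
  rw [roundGames, Multiset.countP_map, Multiset.filter_filter, ← countP_eq_incidenceCount hM hP,
    Multiset.countP_eq_card_filter]
  congr!

lemma IsTournament.fullRound (h : IsTournament σ M) (hN : Even N) (r : Fin N) :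
    FullRound (roundGames M r) := by
  have hman (m : Fin N) : (roundGames M r).countP (Game.manIn m) = 1 :=
    (countP_roundGames h.isProper (manIn_toGame r m)).trans (h.mixed .manRound nofun nofun r m)
  have hwoman (w : Fin N) : (roundGames M r).countP (Game.womanIn w) = 1 :=
    (countP_roundGames h.isProper (womanIn_toGame r w)).trans (h.mixed .womanRound nofun nofun r w)
  exact ⟨⟨fun m => (hman m).le, fun w => (hwoman w).le⟩, .inl ⟨hN, hman, hwoman⟩⟩

lemma IsTournament.exists_opposed_twice (h : IsTournament σ M) {c : Fin N → Fin N → ℕ}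
    (hc : ∀ x y, c x y = if y = x then 0 else if y = σ x then 2 else 1) (x : Fin N) :
    ∃ y, y ≠ x ∧ c x y = 2 ∧ ∀ z, z ≠ x → z ≠ y → c x z = 1 :=
  ⟨σ x, h.pair_ne x, by simp [hc, h.pair_ne x], fun z hx hy => by simp [hc, hx, hy]⟩

/-- The games of a tournament as a tournament without spouses. -/
def IsTournament.toCMDRR (h : IsTournament σ M) : CMDRR N 0 where
  spouses := ∅
  spouses_card := rfl
  spouses_inj1 := by simp
  spouses_inj2 := by simp
  games := M.map (·.toGame)
  valid := by
    simp only [Multiset.mem_map, forall_exists_index, and_imp, forall_apply_eq_imp_iff₂]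
    exact fun t ht => ⟨_, _, rfl, h.isProper t ht⟩
  no_spouse_game := by simp
  partners_once m w _ :=
    (countP_map_toGame h.isProper (partners_toGame m w)).trans (h.mixed .partner nofun nofun m w)
  opposesMW_once m w _ :=
    (countP_map_toGame h.isProper (opposesMW_toGame m w)).trans (h.mixed .opponent nofun nofun m w)
  spousedM_opposes := by simp
  spousedW_opposes := by simp
  unspousedM_opposes m _ := by
    simpa using h.exists_opposed_twice (fun m m' =>
      (countP_map_toGame h.isProper (opposesMM_toGame m m')).trans (h.men m m')) m
  unspousedW_opposes w _ := by
    simpa using h.exists_opposed_twice (fun w w' =>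
      (countP_map_toGame h.isProper (opposesWW_toGame w w')).trans (h.women w w')) w

end Games

end MixedDoubles

/-- For every `n ≥ 5` there is a fully resolvable strict MMDRR(2n), the
resolution consisting of `2n` full rounds. -/
theorem strict_mmdrr_fully_resolvable (n : ℕ) (hn : 5 ≤ n) :
    ∃ T : CMDRR (2 * n) 0, ∃ rounds : Multiset (Multiset (Game (2 * n))),
      rounds.sum = T.games ∧ Multiset.card rounds = 2 * n ∧
      ∀ r ∈ rounds, FullRound r := by
  have e : MixedDoubles.Player (Fin n) ≃ Fin (2 * n) := Fintype.equivOfCardEq (by simp [mul_comm])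
  obtain ⟨σ, M, hM⟩ := (MixedDoubles.tournament_of_five_le hn).exists_isTournament e
  refine ⟨hM.toCMDRR, Finset.univ.val.map (MixedDoubles.roundGames M),
    MixedDoubles.sum_roundGames M, by simp, fun r hr => ?_⟩
  obtain ⟨i, -, rfl⟩ := Multiset.mem_map.1 hr
  exact hM.fullRound (even_two_mul n) i
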